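/- arXiv:dg-ga/9710032 — 6 statements merged into one kernel-verified Lean document; each statement's English description precedes it below -/
import Mathlib

section
/- Let Φ be a 2×2 complex matrix, let Φ̂ ∈ ℂ^(Fin 2 × Fin 2) be the vector with Φ̂_{(i,j)} = Φ_{ij}, let A := (Φ̂⊗Φ̂*)₀₀, and let R be the real 3×3 matrix with entries R_{ab} := Re((1/4)·tr((σ_a⊗σ_b)ᴴ·A)) for a,b ∈ {1,2,3} (so that A = Σ_{a,b} R_{ab}·σ_a⊗σ_b, the real matrix R representing A as a real-linear map su(2)* → su(2)). Then: (1) R has rank 1 over ℝ if and only if Φ has rank 1 over ℂ; (2) R has rank 3 over ℝ if and only if Φ has rank 2 over ℂ. -/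
/-!
Since `σ_a ⊗ σ_b` is traceless in both factors, `R_ab` is, up to the factor `-1/4`, the expectation of
a product of two Hermitian Pauli matrices in the state `Φ̂`; this is `pauliCorrelation Φ`, the spatial
block, up to a reflection and a scalar, of the (unnormalised) Lorentz transformation
`M ↦ Φ M Φ*` of Hermitian matrices. Two facts determine its rank.

* `det_pauliCorrelation`: `det R = |det Φ|² ‖Φ‖² / 16`, the cofactor identity for the spatial block of
  a Lorentz matrix. Hence `R` is invertible exactly when `Φ` is.
* `pauliCorrelation_vecMulVec`: on a product state `Φ = u vᵀ` one has `R = -1/4 • h(u) h(v)ᵀ`, where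
  `h` is the Hopf (Bloch vector) map. As `h` vanishes only at `0`, a singular nonzero `Φ` yields an
  `R` of rank exactly one.
-/

open Matrix Kronecker


/-- The Hopf map `ℂ² → ℝ³`: the expectations of the Hermitian Pauli matrices `Z, Y, X` in the state
`u`. The order `Z, Y, X` matches `σ₁ = iZ`, `σ₂ = iY`, `σ₃ = iX`. -/
noncomputable def hopf (u : Fin 2 → ℂ) : Fin 3 → ℝ :=
  ![Complex.normSq (u 0) - Complex.normSq (u 1), 2 * (star (u 0) * u 1).im,
    2 * (star (u 0) * u 1).re]

/-- `-1/4` times the matrix of expectations of the products `P ⊗ Q`, with `P` and `Q` among the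
Hermitian Pauli matrices `Z, Y, X` in this order, in the two-qubit state with amplitudes `Φ i j`. -/
noncomputable def pauliCorrelation (Φ : Matrix (Fin 2) (Fin 2) ℂ) : Matrix (Fin 3) (Fin 3) ℝ :=
  let n : ℂ → ℝ := Complex.normSq
  let c : ℂ → ℂ → ℂ := fun s t => star s * t
  let x := Φ 0 0
  let y := Φ 0 1
  let z := Φ 1 0
  let w := Φ 1 1
  (-(1 / 4) : ℝ) •
    !![n x - n y - n z + n w, 2 * (c x y - c z w).im, 2 * (c x y - c z w).re;
      2 * (c x z - c y w).im, 2 * (c y z - c x w).re, 2 * (c x w + c y z).im;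
      2 * (c x z - c y w).re, 2 * (c x w - c y z).im, 2 * (c x w + c y z).re]

set_option maxHeartbeats 4000000 in
/-- The projection to the doubly traceless part does not affect the coefficients on `σ_a ⊗ σ_b`, and
`σ_a = i P_a` with `P_a` Hermitian, so `tr ((σ_a ⊗ σ_b)ᴴ A) = -⟨(P_a ⊗ P_b) Φ̂, Φ̂⟩`. -/
theorem coefficients_eq_pauliCorrelation (Φ : Matrix (Fin 2) (Fin 2) ℂ) :
    let Φhat : Fin 2 × Fin 2 → ℂ := fun p => Φ p.1 p.2
    let B : Matrix (Fin 2 × Fin 2) (Fin 2 × Fin 2) ℂ :=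
      Matrix.of fun p q => Φhat p * (starRingEnd ℂ) (Φhat q)
    let A : Matrix (Fin 2 × Fin 2) (Fin 2 × Fin 2) ℂ :=
      Matrix.of fun p q =>
        B p q
          - (1 / 2 : ℂ) * (if p.1 = q.1 then 1 else 0) * ∑ m, B (m, p.2) (m, q.2)
          - (1 / 2 : ℂ) * (if p.2 = q.2 then 1 else 0) * ∑ m, B (p.1, m) (q.1, m)
          + (1 / 4 : ℂ) * (if p.1 = q.1 then 1 else 0) * (if p.2 = q.2 then 1 else 0)
              * ∑ m, ∑ n, B (m, n) (m, n)
    let σ : Fin 3 → Matrix (Fin 2) (Fin 2) ℂ :=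
      ![!![Complex.I, 0; 0, -Complex.I], !![0, 1; -1, 0], !![0, Complex.I; Complex.I, 0]]
    let R : Matrix (Fin 3) (Fin 3) ℝ :=
      Matrix.of fun a b => ((1 / 4 : ℂ) * ((σ a ⊗ₖ σ b)ᴴ * A).trace).re
    R = pauliCorrelation Φ := by
  ext a b
  fin_cases a <;> fin_cases b <;>
  · simp [pauliCorrelation, Matrix.trace, Matrix.mul_apply, Fintype.sum_prod_type,
      Fin.sum_univ_two, kroneckerMap_apply, Complex.normSq_apply]
    ring

theorem det_pauliCorrelation (Φ : Matrix (Fin 2) (Fin 2) ℂ) :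
    (pauliCorrelation Φ).det = 1 / 16 * Complex.normSq Φ.det *
      (Complex.normSq (Φ 0 0) + Complex.normSq (Φ 0 1) + Complex.normSq (Φ 1 0)
        + Complex.normSq (Φ 1 1)) := by
  simp [pauliCorrelation, det_fin_three, det_fin_two, Complex.normSq_apply]
  ring

/-- On a product state the expectation of `P ⊗ Q` factors. -/
theorem pauliCorrelation_vecMulVec (u v : Fin 2 → ℂ) :
    pauliCorrelation (vecMulVec u v) = (-(1 / 4) : ℝ) • vecMulVec (hopf u) (hopf v) := by
  ext a b
  fin_cases a <;> fin_cases b <;>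
  · simp [pauliCorrelation, hopf, vecMulVec_apply, Complex.normSq_apply]
    ring

theorem hopf_eq_zero_iff (u : Fin 2 → ℂ) : hopf u = 0 ↔ u = 0 := by
  constructor
  · intro h
    have h0 : Complex.normSq (u 0) - Complex.normSq (u 1) = 0 := congrFun h 0
    have h1 : 2 * (star (u 0) * u 1).im = 0 := congrFun h 1
    have h2 : 2 * (star (u 0) * u 1).re = 0 := congrFun h 2
    have h3 : star (u 0) * u 1 = 0 := Complex.ext (by simpa using h2) (by simpa using h1)
    rcases mul_eq_zero.1 h3 with h4 | h4
    · have h5 : u 0 = 0 := star_eq_zero.1 h4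
      have h6 : u 1 = 0 := by simpa [h5] using h0
      ext i
      fin_cases i <;> simp [h5, h6]
    · have h6 : u 0 = 0 := by simpa [h4] using h0
      ext i
      fin_cases i <;> simp [h4, h6]
  · rintro rfl
    ext i
    fin_cases i <;> simp [hopf]

theorem exists_vecMulVec_of_det_eq_zero {Φ : Matrix (Fin 2) (Fin 2) ℂ} (h : Φ.det = 0) :
    ∃ u v, Φ = vecMulVec u v := by
  rw [det_fin_two] at h
  by_cases hx : Φ 0 0 = 0
  · by_cases hy : Φ 0 1 = 0
    · refine ⟨![0, 1], Φ 1, ?_⟩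
      ext i j
      fin_cases i <;> fin_cases j <;> simp [vecMulVec_apply, hx, hy]
    · have hz : Φ 1 0 = 0 := by simpa [hx, hy] using h
      refine ⟨![1, Φ 1 1 / Φ 0 1], Φ 0, ?_⟩
      ext i j
      fin_cases i <;> fin_cases j <;> simp [vecMulVec_apply, hx, hy, hz]
  · refine ⟨![1, Φ 1 0 / Φ 0 0], Φ 0, ?_⟩
    ext i j
    fin_cases i <;> fin_cases j <;> simp [vecMulVec_apply, hx]
    field_simp
    linear_combination h

theorem rank_eq_card_iff_det_ne_zero {K n : Type*} [Field K] [Fintype n] [DecidableEq n]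
    (M : Matrix n n K) : M.rank = Fintype.card n ↔ M.det ≠ 0 := by
  rw [← isUnit_iff_ne_zero, ← isUnit_iff_isUnit_det]
  refine ⟨fun h => ?_, rank_of_isUnit M⟩
  rw [← linearIndependent_rows_iff_isUnit, linearIndependent_iff_card_eq_finrank_span,
    ← h, rank_eq_finrank_span_row]
  rfl

theorem rank_eq_one_iff_of_rank_le_one {K m n : Type*} [Field K] [Fintype m] [Fintype n]
    {M : Matrix m n K} (h : M.rank ≤ 1) : M.rank = 1 ↔ M ≠ 0 := by
  classical
  have h0 : M.rank = 0 ↔ M = 0 := by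
    rw [rank, Submodule.finrank_eq_zero, LinearMap.range_eq_bot]
    exact ⟨fun h => ext_of_mulVec_single fun i => by
      rw [zero_mulVec]
      exact LinearMap.congr_fun h (Pi.single i 1), fun h => by simp [h]⟩
  rw [ne_eq, ← h0]
  omega

theorem det_pauliCorrelation_ne_zero_iff (Φ : Matrix (Fin 2) (Fin 2) ℂ) :
    (pauliCorrelation Φ).det ≠ 0 ↔ Φ.det ≠ 0 := by
  rw [det_pauliCorrelation]
  refine ⟨fun h h0 => h (by simp [h0]), fun h => ?_⟩
  have hpos : 0 < Complex.normSq Φ.det := Complex.normSq_pos.2 h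
  have a := Complex.normSq_nonneg (Φ 0 0)
  have b := Complex.normSq_nonneg (Φ 0 1)
  have c := Complex.normSq_nonneg (Φ 1 0)
  have d := Complex.normSq_nonneg (Φ 1 1)
  -- If `‖Φ‖² = 0`, the first row of `Φ` vanishes and so does its determinant.
  refine mul_ne_zero (by positivity) fun hs => h ?_
  have h1 : Φ 0 0 = 0 := Complex.normSq_eq_zero.1 (by linarith)
  have h2 : Φ 0 1 = 0 := Complex.normSq_eq_zero.1 (by linarith)
  simp [det_fin_two, h1, h2]

theorem rank_pauliCorrelation_eq_one_iff (Φ : Matrix (Fin 2) (Fin 2) ℂ) :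
    (pauliCorrelation Φ).rank = 1 ↔ Φ.rank = 1 := by
  by_cases h : Φ.det = 0
  · obtain ⟨u, v, rfl⟩ := exists_vecMulVec_of_det_eq_zero h
    have hR := pauliCorrelation_vecMulVec u v
    rw [← smul_vecMulVec] at hR
    rw [hR, rank_eq_one_iff_of_rank_le_one (rank_vecMulVec_le _ _),
      rank_eq_one_iff_of_rank_le_one (rank_vecMulVec_le _ _)]
    simp [vecMulVec_eq_zero, hopf_eq_zero_iff]
  · have h2 := (rank_eq_card_iff_det_ne_zero Φ).2 h
    have h3 := (rank_eq_card_iff_det_ne_zero _).2 ((det_pauliCorrelation_ne_zero_iff Φ).2 h)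
    simp [h2, h3]

/-- For a 2×2 complex matrix `Φ` with associated vector `Φ̂ ∈ ℂ²⊗ℂ²`,
`A = (Φ̂⊗Φ̂*)₀₀`, and the real 3×3 matrix `R` of coefficients of `A` in the basis
`σ_a⊗σ_b` of Pauli products: `R` has real rank 1 iff `Φ` has complex rank 1,
and `R` has real rank 3 iff `Φ` has complex rank 2. -/
theorem rank_of_doubly_traceless_component (Φ : Matrix (Fin 2) (Fin 2) ℂ) :
    let Φhat : Fin 2 × Fin 2 → ℂ := fun p => Φ p.1 p.2
    let B : Matrix (Fin 2 × Fin 2) (Fin 2 × Fin 2) ℂ :=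
      Matrix.of fun p q => Φhat p * (starRingEnd ℂ) (Φhat q)
    let A : Matrix (Fin 2 × Fin 2) (Fin 2 × Fin 2) ℂ :=
      Matrix.of fun p q =>
        B p q
          - (1 / 2 : ℂ) * (if p.1 = q.1 then 1 else 0) * ∑ m, B (m, p.2) (m, q.2)
          - (1 / 2 : ℂ) * (if p.2 = q.2 then 1 else 0) * ∑ m, B (p.1, m) (q.1, m)
          + (1 / 4 : ℂ) * (if p.1 = q.1 then 1 else 0) * (if p.2 = q.2 then 1 else 0)
              * ∑ m, ∑ n, B (m, n) (m, n)
    let σ : Fin 3 → Matrix (Fin 2) (Fin 2) ℂ :=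
      ![!![Complex.I, 0; 0, -Complex.I], !![0, 1; -1, 0], !![0, Complex.I; Complex.I, 0]]
    let R : Matrix (Fin 3) (Fin 3) ℝ :=
      Matrix.of fun a b => ((1 / 4 : ℂ) * ((σ a ⊗ₖ σ b)ᴴ * A).trace).re
    (R.rank = 1 ↔ Φ.rank = 1) ∧ (R.rank = 3 ↔ Φ.rank = 2) := by
  intro Φhat B A σ R
  have hR : R = pauliCorrelation Φ := coefficients_eq_pauliCorrelation Φ
  have h3 := rank_eq_card_iff_det_ne_zero (pauliCorrelation Φ)
  have h2 := rank_eq_card_iff_det_ne_zero Φ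
  rw [Fintype.card_fin] at h2 h3
  rw [hR, h3, h2]
  exact ⟨rank_pauliCorrelation_eq_one_iff Φ, det_pauliCorrelation_ne_zero_iff Φ⟩
end

section
/- Let M and N be real 3×3 matrices, representing elements of Λ⁺⊗su(E) at a point via orthonormal bases identifying Λ⁺ with ℝ³ and su(E) with ℝ³, under which the adjoint action ad(m) of m ∈ su(E) becomes the cross product v ↦ m ×₃ v, with matrix C_m. Let m₁, m₂, m₃ ∈ ℝ³ span ℝ³. If tr((M·τ₀ᵀ)ᵀ·N) + Σ_{l=1}^{3} tr((C_{m_l}·M·τ_lᵀ)ᵀ·N) = 0 for all real 3×3 matrices τ₀, τ₁, τ₂, τ₃, then M = 0 or N = 0. -/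
open Matrix

/-!
Taking all but one of the `τ`'s to be zero, nondegeneracy of the trace pairing gives `Mᵀ N = 0` and
`(C_l M)ᵀ N = 0` for every `l`. Hence each column `a` of `M` and each column `b` of `N` satisfy
`a ⬝ b = 0` and `(m_l × a) ⬝ b = 0`, i.e. `m_l ⬝ (a × b) = 0`. As the `m_l` span, `a × b = 0`: the
vectors are both orthogonal and parallel, so one of them vanishes. If some column of `M` is
nonzero, every column of `N` is then zero.
-/

/-- Lagrange's identity `|a × b|² = |a|² |b|² - (a ⬝ b)²` forces one of two vectors that are both
orthogonal and parallel to vanish. -/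
lemma eq_zero_or_eq_zero_of_dot_of_cross (a b : Fin 3 → ℝ) (hd : a ⬝ᵥ b = 0)
    (hc : crossProduct a b = 0) : a = 0 ∨ b = 0 := by
  have h1 := cross_dot_cross a b a b
  rw [hc, hd, zero_dotProduct, zero_mul, sub_zero] at h1
  rcases mul_eq_zero.mp h1.symm with h2 | h2
  · exact Or.inl (dotProduct_self_eq_zero.mp h2)
  · exact Or.inr (dotProduct_self_eq_zero.mp h2)

lemma eq_zero_of_dot_spanning {ι : Type*} (m : ι → Fin 3 → ℝ)
    (hspan : Submodule.span ℝ (Set.range m) = ⊤) (w : Fin 3 → ℝ)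
    (hw : ∀ l, m l ⬝ᵥ w = 0) : w = 0 := by
  have key : ∀ v ∈ Submodule.span ℝ (Set.range m), v ⬝ᵥ w = 0 := by
    intro v hv
    induction hv using Submodule.span_induction with
    | mem x hx => obtain ⟨l, rfl⟩ := hx; exact hw l
    | zero => exact zero_dotProduct w
    | add x y _ _ hx hy => rw [add_dotProduct, hx, hy, add_zero]
    | smul c x _ hx => rw [smul_dotProduct, hx, smul_zero]
  exact dotProduct_self_eq_zero.mp (key w (hspan ▸ Submodule.mem_top))

/-- Nondegeneracy of the trace pairing, in the form `⟨A τᵀ, N⟩ = ⟨τᵀ, Aᵀ N⟩`. -/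
lemma transpose_mul_eq_zero_of_trace (A N : Matrix (Fin 3) (Fin 3) ℝ)
    (h : ∀ τ : Matrix (Fin 3) (Fin 3) ℝ, ((A * τᵀ)ᵀ * N).trace = 0) : Aᵀ * N = 0 := by
  rw [Matrix.ext_iff_trace_mul_left]
  intro τ
  simpa [Matrix.transpose_mul, Matrix.mul_assoc] using h τ

/-- If `m₁, m₂, m₃` span `ℝ³`, `C_{m_l}` is the matrix of the cross product with `m_l`,
and `tr((M·τ₀ᵀ)ᵀ·N) + Σ_l tr((C_{m_l}·M·τ_lᵀ)ᵀ·N) = 0` for all real 3×3 matrices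
`τ₀, τ₁, τ₂, τ₃`, then `M = 0` or `N = 0`. -/
theorem pointwise_surjectivity_quadratic_perturbation
    (M N : Matrix (Fin 3) (Fin 3) ℝ)
    (m : Fin 3 → (Fin 3 → ℝ))
    (C : Fin 3 → Matrix (Fin 3) (Fin 3) ℝ)
    (hC : ∀ l (v : Fin 3 → ℝ), (C l).mulVec v = crossProduct (m l) v)
    (hspan : Submodule.span ℝ (Set.range m) = ⊤)
    (h : ∀ (τ₀ : Matrix (Fin 3) (Fin 3) ℝ) (τ : Fin 3 → Matrix (Fin 3) (Fin 3) ℝ),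
      ((M * τ₀ᵀ)ᵀ * N).trace + ∑ l, ((C l * M * (τ l)ᵀ)ᵀ * N).trace = 0) :
    M = 0 ∨ N = 0 := by
  have h0 : Mᵀ * N = 0 := transpose_mul_eq_zero_of_trace M N fun τ => by
    simpa using h τ 0
  have hl : ∀ l, (C l * M)ᵀ * N = 0 := fun l =>
    transpose_mul_eq_zero_of_trace (C l * M) N fun τ => by
      have h1 := h 0 (Pi.single l τ)
      rw [Finset.sum_eq_single l (fun k _ hk => by simp [Pi.single_eq_of_ne hk]) (by simp)] at h1
      simpa using h1
  have hcol : ∀ i j, Mᵀ i = 0 ∨ Nᵀ j = 0 := by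
    intro i j
    refine eq_zero_or_eq_zero_of_dot_of_cross _ _ (congrFun (congrFun h0 i) j) ?_
    refine eq_zero_of_dot_spanning m hspan _ fun l => ?_
    -- entry `(i, j)` of `(C l * M)ᵀ * N` is the triple product of `m l` and the two columns
    have h1 : (C l).mulVec (Mᵀ i) ⬝ᵥ Nᵀ j = 0 := congrFun (congrFun (hl l) i) j
    rw [hC, dotProduct_comm, triple_product_permutation] at h1
    exact h1
  by_cases hM : ∀ i, Mᵀ i = 0
  · left
    ext i j
    exact congrFun (hM j) i
  · right
    obtain ⟨i, hi⟩ := not_forall.mp hM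
    ext k j
    exact congrFun ((hcol i j).resolve_left hi) k
end

section
/- Let S⁺, S⁻ ∈ ℂ^(Fin 2 × Fin 2) be vectors (elements of W⁺⊗E and W⁻⊗E with W⁺ ≅ W⁻ ≅ E ≅ ℂ²). Let m₀, m₁, m₂, m₃ be skew-Hermitian 2×2 complex matrices (m_lᴴ = −m_l) whose real linear span is the whole 4-dimensional real space u(2) of skew-Hermitian 2×2 complex matrices. If Σ_{l=0}^{3} ⟨(ϑ_l⊗m_l)·S⁺, S⁻⟩ = 0 for all 2×2 complex matrices ϑ₀, ϑ₁, ϑ₂, ϑ₃, then S⁺ = 0 or S⁻ = 0. -/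
/-!
Since `ϑ ↦ ∑ l, ⟨(ϑ l ⊗ m l) S⁺, S⁻⟩` vanishes identically, each pairing `⟨(ϑ ⊗ m l) S⁺, S⁻⟩`
vanishes. The pairing is complex linear in the second tensor factor, the `m l` span the
skew-Hermitian matrices over `ℝ`, and those span all 2×2 matrices over `ℂ`; hence
`⟨(ϑ ⊗ A) S⁺, S⁻⟩ = 0` for all `ϑ` and `A`. Taking both factors to be matrix units shows that
every product `S⁺ q * conj (S⁻ p)` of coordinates is zero, so one of the two vectors is zero.
-/

open Matrix Kronecker

/-- The pairing `⟨(ϑ ⊗ A) S⁺, S⁻⟩` as a complex linear function of `A`. -/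
def diracPairing (Sp Sm : Fin 2 × Fin 2 → ℂ) (ϑ : Matrix (Fin 2) (Fin 2) ℂ) :
    Matrix (Fin 2) (Fin 2) ℂ →ₗ[ℂ] ℂ where
  toFun A := ∑ p, (ϑ ⊗ₖ A).mulVec Sp p * (starRingEnd ℂ) (Sm p)
  map_add' A B := by
    simp [Matrix.kronecker_add, Matrix.add_mulVec, add_mul, Finset.sum_add_distrib]
  map_smul' c A := by
    simp only [Matrix.kronecker_smul, Matrix.smul_mulVec, Pi.smul_apply, smul_eq_mul,
      RingHom.id_apply, Finset.mul_sum, mul_assoc]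

/-- A complex linear functional vanishing on skew-Hermitian matrices is zero, because
`A = (A - Aᴴ) / 2 - I * (I * (A + Aᴴ)) / 2`, where `A - Aᴴ` and `I * (A + Aᴴ)` are
skew-Hermitian. -/
lemma eq_zero_of_skewHermitian (f : Matrix (Fin 2) (Fin 2) ℂ →ₗ[ℂ] ℂ)
    (hf : ∀ A : Matrix (Fin 2) (Fin 2) ℂ, Aᴴ = -A → f A = 0)
    (A : Matrix (Fin 2) (Fin 2) ℂ) : f A = 0 := by
  have h1 : f (A - Aᴴ) = 0 := hf _ (by simp)
  have h2 : f (Complex.I • (A + Aᴴ)) = 0 := hf _ (by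
    simp [Matrix.conjTranspose_smul, add_comm])
  rw [map_sub] at h1
  rw [map_smul, map_add, smul_eq_mul] at h2
  have h3 := (mul_eq_zero.mp h2).resolve_left Complex.I_ne_zero
  linear_combination (h1 + h3) / 2

/-- If `m₀, …, m₃` are skew-Hermitian 2×2 matrices whose real span is all of `u(2)`,
and `Σ_l ⟨(ϑ_l⊗m_l)·S⁺, S⁻⟩ = 0` for all 2×2 complex matrices `ϑ₀, …, ϑ₃`, then
`S⁺ = 0` or `S⁻ = 0`. -/
theorem pointwise_nonvanishing_dirac_perturbation
    (Sp Sm : Fin 2 × Fin 2 → ℂ)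
    (m : Fin 4 → Matrix (Fin 2) (Fin 2) ℂ)
    (hskew : ∀ l, (m l)ᴴ = -(m l))
    (hspan : ∀ A : Matrix (Fin 2) (Fin 2) ℂ, Aᴴ = -A →
      A ∈ Submodule.span ℝ (Set.range m))
    (h : ∀ ϑ : Fin 4 → Matrix (Fin 2) (Fin 2) ℂ,
      ∑ l, ∑ p, (ϑ l ⊗ₖ m l).mulVec Sp p * (starRingEnd ℂ) (Sm p) = 0) :
    Sp = 0 ∨ Sm = 0 := by
  have hm : ∀ ϑ l, diracPairing Sp Sm ϑ (m l) = 0 := by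
    intro ϑ l
    have hl := h (Pi.single l ϑ)
    rw [Finset.sum_eq_single l] at hl
    · simpa [diracPairing] using hl
    · intro k _ hk
      simp [Pi.single_eq_of_ne hk]
    · simp
  have hall : ∀ ϑ A, diracPairing Sp Sm ϑ A = 0 := by
    intro ϑ
    refine eq_zero_of_skewHermitian _ fun A hA => ?_
    have hle : Submodule.span ℝ (Set.range m) ≤
        LinearMap.ker ((diracPairing Sp Sm ϑ).restrictScalars ℝ) := by
      rw [Submodule.span_le]
      rintro _ ⟨l, rfl⟩
      exact hm ϑ l
    exact hle (hspan A hA)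
  have hprod : ∀ p q, Sp q * (starRingEnd ℂ) (Sm p) = 0 := by
    rintro ⟨i, j⟩ ⟨k, l⟩
    have := hall (Matrix.single i k 1) (Matrix.single j l 1)
    simpa [diracPairing, Matrix.single_kronecker_single, Matrix.single_mulVec, Function.update_apply,
      ite_mul] using this
  by_contra! hne
  obtain ⟨q, hq⟩ := Function.ne_iff.mp hne.1
  obtain ⟨p, hp⟩ := Function.ne_iff.mp hne.2
  rcases mul_eq_zero.mp (hprod p q) with h0 | h0
  · exact hq h0
  · exact hp (by simpa using h0)
end

section
/- Let n ≥ 1 and let A, a : ℝ → Matrix (Fin n) (Fin n) ℂ be continuous. Suppose Y : ℝ → ℝ → Matrix (Fin n) (Fin n) ℂ is such that for every s ∈ ℝ: Y(0,s) = 1 and, for every t ∈ ℝ, the map t ↦ Y(t,s) has derivative −(A(t) + s·a(t))·Y(t,s) at t (so Y(·,s) is the parallel-transport/fundamental solution for the connection matrix A + s·a). Assume moreover that Y(τ,0) is invertible for every τ ∈ ℝ (which holds automatically). Then for every t ∈ ℝ, the map s ↦ Y(t,s) is differentiable at s = 0 with derivative −Y(t,0)·∫₀ᵗ Y(τ,0)⁻¹·a(τ)·Y(τ,0)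 dτ. -/
open Matrix intervalIntegral

attribute [local instance] Matrix.normedAddCommGroup Matrix.normedSpace

/-!
Write `Z(t) = Y(t,0)⁻¹` and factor out the unperturbed solution: `V(t,s) = Z(t) * Y(t,s)` solves
`∂V/∂t = -s • (B(t) * V)`, `V(0,s) = 1`, with `B = Z * a * Y(·,0)`; the terms in `A` cancel.
Let `J` be the primitive of `B` vanishing at `0`. Grönwall's inequality gives `V(τ,s) → 1` as
`s → 0`, uniformly in `τ` between `0` and `t`. The function `V - 1 + s • J` has derivative
`-s • (B * (V - 1))`, which is therefore uniformly `o(s)`, so `V(t,s) = 1 - s • J(t) + o(s)`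
(`hasDerivAt_param_of_nonneg`). Multiplying by `Y(t,0)` gives the formula.

The estimates need a submultiplicative norm, which the entrywise sup norm on matrices is not. They
are carried out in an abstract normed algebra, with the integral replaced by a primitive `J`; the
result then mentions only the topology and applies to matrices via the `ℓ^∞` operator norm.
-/

open Set Filter Topology

section Abstract

variable {E : Type*} [NormedRing E] [NormedAlgebra ℝ E]

/-- The reduced equation `∂V/∂t = -s • (B * V)`, `V(0,s) = 1`, for forward times. -/
lemma hasDerivAt_param_of_nonneg {B J : ℝ → E} {V : ℝ → ℝ → E} (hB : Continuous B)
    (hJ0 : J 0 = 0) (hJ : ∀ t, HasDerivAt J (B t) t) (hV0 : ∀ s, V 0 s = 1)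
    (hV : ∀ s t, HasDerivAt (fun t' => V t' s) (-(s • (B t * V t s))) t) {t : ℝ} (ht : 0 ≤ t) :
    HasDerivAt (fun s => V t s) (-J t) 0 := by
  obtain ⟨M₀, hM₀⟩ := (isCompact_Icc (a := (0 : ℝ)) (b := t)).exists_bound_of_continuousOn
    hB.continuousOn
  obtain ⟨M, hM, hMpos⟩ : ∃ M : ℝ, (∀ x ∈ Icc 0 t, ‖B x‖ ≤ M) ∧ 0 ≤ M :=
    ⟨max M₀ 0, fun x hx => (hM₀ x hx).trans (le_max_left _ _), le_max_right _ _⟩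
  set η : ℝ → ℝ := fun s => gronwallBound 0 M (|s| * (M * ‖(1 : E)‖)) t with hη
  have hηt : Tendsto η (𝓝 0) (𝓝 0) := by
    have hc : Continuous η := (gronwallBound_continuous_ε 0 M t).comp (by fun_prop)
    have := hc.tendsto 0
    simpa [hη, gronwallBound_ε0_δ0] using this
  -- Grönwall: `V - 1` is bounded by `η s` on `[0, t]`.
  have hclose : ∀ s, |s| ≤ 1 → ∀ x ∈ Icc 0 t, ‖V x s - 1‖ ≤ η s := by
    intro s hs x hx
    have hd : ∀ x, HasDerivAt (fun x => V x s - 1) (-(s • (B x * V x s))) x :=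
      fun x => (hV s x).sub_const 1
    have h := norm_le_gronwallBound_of_norm_deriv_right_le (δ := 0) (K := M)
      (ε := |s| * (M * ‖(1 : E)‖)) (a := 0) (b := t)
      (fun x _ => (hd x).continuousAt.continuousWithinAt)
      (fun x _ => (hd x).hasDerivWithinAt) (by simp [hV0]) (by
        intro y hy
        have hy' := hM y (Ico_subset_Icc_self hy)
        have h1 : ‖V y s‖ ≤ ‖V y s - 1‖ + ‖(1 : E)‖ := by
          simpa using norm_add_le (V y s - 1) 1
        rw [norm_neg, norm_smul, Real.norm_eq_abs]
        calc |s| * ‖B y * V y s‖ ≤ |s| * (M * (‖V y s - 1‖ + ‖(1 : E)‖)) := by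
              gcongr
              exact (norm_mul_le _ _).trans (by gcongr)
          _ = |s| * (M * ‖V y s - 1‖) + |s| * (M * ‖(1 : E)‖) := by ring
          _ ≤ M * ‖V y s - 1‖ + |s| * (M * ‖(1 : E)‖) := by
              have := mul_le_of_le_one_left (a := |s|) (mul_nonneg hMpos (norm_nonneg (V y s - 1))) hs
              linarith) x hx
    refine h.trans (gronwallBound_mono le_rfl (by positivity) hMpos ?_)
    simpa using hx.2
  have hrem : ∀ s, |s| ≤ 1 → ‖V t s - 1 + s • J t‖ ≤ |s| * (M * η s) * t := by
    intro s hs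
    have hd : ∀ x, HasDerivAt (fun x => V x s - 1 + s • J x)
        (-(s • (B x * (V x s - 1)))) x := by
      intro x
      have := ((hV s x).sub_const 1).add ((hJ x).const_smul s)
      refine this.congr_deriv ?_
      rw [mul_sub, mul_one, smul_sub]
      abel
    have h := norm_image_sub_le_of_norm_deriv_le_segment' (a := 0) (b := t)
      (C := |s| * (M * η s)) (fun x _ => (hd x).hasDerivWithinAt) (by
        intro y hy
        have hy' := Ico_subset_Icc_self hy
        rw [norm_neg, norm_smul, Real.norm_eq_abs]
        gcongr
        exact (norm_mul_le _ _).trans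
          (mul_le_mul (hM y hy') (hclose s hs y hy') (norm_nonneg _) hMpos)) t ⟨ht, le_rfl⟩
    simpa [hV0, hJ0] using h
  have hVt0 : V t 0 = 1 := by
    have := hrem 0 (by simp)
    simpa [sub_eq_zero] using this
  rw [hasDerivAt_iff_isLittleO, Asymptotics.isLittleO_iff]
  intro c hc
  have hsmall : ∀ᶠ s in 𝓝 (0 : ℝ), M * η s * t < c := by
    have : Tendsto (fun s => M * η s * t) (𝓝 0) (𝓝 (M * 0 * t)) :=
      (hηt.const_mul M).mul_const t
    exact this.eventually_lt_const (by simpa using hc)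
  have hone : ∀ᶠ s in 𝓝 (0 : ℝ), |s| ≤ 1 := by
    have : Tendsto (fun s : ℝ => |s|) (𝓝 0) (𝓝 |0|) := continuous_abs.tendsto 0
    exact (this.eventually_lt_const (by simp)).mono fun _ h => le_of_lt h
  filter_upwards [hsmall, hone] with s h1 h2
  have h3 := hrem s h2
  rw [hVt0]
  simp only [sub_zero, smul_neg, sub_neg_eq_add, Real.norm_eq_abs]
  calc _ ≤ |s| * (M * η s) * t := h3
    _ = (M * η s * t) * |s| := by ring
    _ ≤ c * |s| := by gcongr

/-- The same for all times: negative times reduce to positive ones by the reflection `t ↦ -t`. -/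
lemma hasDerivAt_param {B J : ℝ → E} {V : ℝ → ℝ → E} (hB : Continuous B)
    (hJ0 : J 0 = 0) (hJ : ∀ t, HasDerivAt J (B t) t) (hV0 : ∀ s, V 0 s = 1)
    (hV : ∀ s t, HasDerivAt (fun t' => V t' s) (-(s • (B t * V t s))) t) (t : ℝ) :
    HasDerivAt (fun s => V t s) (-J t) 0 := by
  rcases le_total 0 t with ht | ht
  · exact hasDerivAt_param_of_nonneg hB hJ0 hJ hV0 hV ht
  · have h := hasDerivAt_param_of_nonneg (B := fun x => -B (-x)) (J := fun x => J (-x))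
      (V := fun x s => V (-x) s) (by fun_prop) (by simpa using hJ0)
      (fun x => ((hJ (-x)).scomp x (hasDerivAt_neg x)).congr_deriv (by simp))
      (fun s => by simpa using hV0 s)
      (fun s x => ((hV s (-x)).scomp x (hasDerivAt_neg x)).congr_deriv (by simp))
      (t := -t) (by linarith)
    simpa using h

/-- Differentiation of the fundamental solution in the parameter, with the integral expressed
through a primitive `J`. -/
lemma hasDerivAt_fundamental_solution [CompleteSpace E] {A a J : ℝ → E} {Y : ℝ → ℝ → E}
    (ha : Continuous a) (hY0 : ∀ s, Y 0 s = 1)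
    (hYd : ∀ s t, HasDerivAt (fun t' => Y t' s) (-((A t + s • a t) * Y t s)) t)
    (hYinv : ∀ τ, IsUnit (Y τ 0)) (hJ0 : J 0 = 0)
    (hJ : ∀ t, HasDerivAt J (Ring.inverse (Y t 0) * a t * Y t 0) t) (t : ℝ) :
    HasDerivAt (fun s => Y t s) (-(Y t 0 * J t)) 0 := by
  have hYc : Continuous fun t => Y t 0 :=
    continuous_iff_continuousAt.2 fun t => (hYd 0 t).continuousAt
  have hZ : ∀ t, HasDerivAt (fun t => Ring.inverse (Y t 0)) (Ring.inverse (Y t 0) * A t) t := by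
    intro t
    obtain ⟨u, hu⟩ := hYinv t
    have h1 := hasFDerivAt_ringInverse (𝕜 := ℝ) u
    rw [hu] at h1
    have h2 := h1.comp_hasDerivAt t (hYd 0 t)
    refine h2.congr_deriv ?_
    simp [← hu, mul_assoc]
  have hZc : Continuous fun t => Ring.inverse (Y t 0) :=
    continuous_iff_continuousAt.2 fun t => (hZ t).continuousAt
  have key := hasDerivAt_param (B := fun t => Ring.inverse (Y t 0) * a t * Y t 0)
    (V := fun t s => Ring.inverse (Y t 0) * Y t s)
    ((hZc.mul ha).mul hYc) hJ0 hJ (fun s => by simp [hY0]) (by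
      intro s t
      have h := (hZ t).mul (hYd s t)
      refine h.congr_deriv ?_
      have hc : Y t 0 * (Ring.inverse (Y t 0) * Y t s) = Y t s :=
        Ring.mul_inverse_cancel_left _ _ (hYinv t)
      rw [mul_assoc (Ring.inverse (Y t 0) * a t), hc]
      simp only [add_mul, mul_add, mul_neg, smul_mul_assoc, mul_smul_comm, mul_assoc]
      abel) t
  have h := key.const_mul (Y t 0)
  simpa [Ring.mul_inverse_cancel_left _ _ (hYinv t)] using h

end Abstract

/-- `hasDerivAt_fundamental_solution` for matrices. The `ℓ^∞` operator norm induces the entrywise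
topology, so the conclusion does not depend on which norm is used. -/
lemma hasDerivAt_fundamental_solution_matrix {n : ℕ} {A a J : ℝ → Matrix (Fin n) (Fin n) ℂ}
    {Y : ℝ → ℝ → Matrix (Fin n) (Fin n) ℂ}
    (ha : Continuous a) (hY0 : ∀ s, Y 0 s = 1)
    (hYd : ∀ s t, HasDerivAt (fun t' => Y t' s) (-((A t + s • a t) * Y t s)) t)
    (hYinv : ∀ τ, IsUnit (Y τ 0)) (hJ0 : J 0 = 0)
    (hJ : ∀ t, HasDerivAt J (Ring.inverse (Y t 0) * a t * Y t 0) t) (t : ℝ) :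
    HasDerivAt (fun s => Y t s) (-(Y t 0 * J t)) 0 :=
  @hasDerivAt_fundamental_solution (Matrix (Fin n) (Fin n) ℂ) Matrix.linftyOpNormedRing
    Matrix.linftyOpNormedAlgebra
    (inferInstanceAs (CompleteSpace (Fin n → Fin n → ℂ))) A a J Y ha hY0 hYd hYinv hJ0 hJ t

/-- Differential of parallel transport with respect to the connection: if `Y(·,s)` is
the fundamental solution of `dY/dt = −(A(t) + s·a(t))·Y`, `Y(0,s) = 1`, and `Y(τ,0)` is
invertible for every `τ`, then `s ↦ Y(t,s)` is differentiable at `s = 0` with derivative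
`−Y(t,0)·∫₀ᵗ Y(τ,0)⁻¹·a(τ)·Y(τ,0) dτ`. -/
theorem differential_of_parallel_transport
    (n : ℕ) (hn : 1 ≤ n)
    (A a : ℝ → Matrix (Fin n) (Fin n) ℂ)
    (hA : Continuous A) (ha : Continuous a)
    (Y : ℝ → ℝ → Matrix (Fin n) (Fin n) ℂ)
    (hY0 : ∀ s : ℝ, Y 0 s = 1)
    (hYd : ∀ s t : ℝ, HasDerivAt (fun t' => Y t' s) (-((A t + s • a t) * Y t s)) t)
    (hYinv : ∀ τ : ℝ, IsUnit (Y τ 0)) :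
    ∀ t : ℝ,
      HasDerivAt (fun s => Y t s)
        (-(Y t 0 * ∫ τ in (0 : ℝ)..t, (Y τ 0)⁻¹ * a τ * Y τ 0)) 0 := by
  intro t
  have hYc : Continuous fun t => Y t 0 :=
    continuous_iff_continuousAt.2 fun t => (hYd 0 t).continuousAt
  have hdet : ∀ τ, (Y τ 0).det ≠ 0 := fun τ =>
    ((Matrix.isUnit_iff_isUnit_det _).1 (hYinv τ)).ne_zero
  have hZc : Continuous fun t => (Y t 0)⁻¹ := by
    simp only [Matrix.inv_def, Ring.inverse_eq_inv']
    exact (hYc.matrix_det.inv₀ hdet).smul hYc.matrix_adjugate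
  have hBc : Continuous fun τ => (Y τ 0)⁻¹ * a τ * Y τ 0 :=
    (hZc.matrix_mul ha).matrix_mul hYc
  refine hasDerivAt_fundamental_solution_matrix (A := A)
    (J := fun t => ∫ τ in (0 : ℝ)..t, (Y τ 0)⁻¹ * a τ * Y τ 0) ha hY0 hYd hYinv (by simp) ?_ t
  intro x
  rw [← Matrix.nonsing_inv_eq_ringInverse]
  exact (hBc.integral_hasStrictDerivAt 0 x).hasDerivAt
end

section
/- Let H be a real Hilbert space, let m ∈ ℕ, let x₀, x₁, …, x_m ∈ H and r₀, r₁, …, r_m > 0, and let V := B(x₀,r₀) ∩ ᶜB̄(x₁,r₁) ∩ ⋯ ∩ ᶜB̄(x_m,r_m) be the scalloped open set obtained by removing the closed balls B̄(x_i,r_i), 1 ≤ i ≤ m, from the open ball B(x₀,r₀). Then there exists a function ω : H → ℝ which is C^∞, takes values in [0,1], satisfies ω(x) > 0 for every x ∈ V and ω(x) = 0 for every x ∉ V, and has bounded differentials of all orders. -/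
/-!
Let `S` be the smooth transition function, which vanishes exactly on `(-∞, 0]`, and put
`ω y = S (r₀² - ‖y - x₀‖²) * ∏ i, S (‖y - xᵢ‖² - rᵢ²)`; this is positive exactly on `V`.
No compactness is available in `H`, so the bounds come from temperate growth: `S` is constant
outside `[0, 1]`, hence has temperate growth; squared distances in a Hilbert space have temperate
growth; and temperate growth is stable under composition and products. Each differential of `ω` is
thus at most polynomial in `‖y‖`. As `ω` vanishes outside the bounded set `B(x₀, r₀)`, so do its
differentials outside the closed ball, and a polynomially growing function with bounded support
is bounded.
-/

/-- The derivative of `smoothTransition` is supported in `[0, 1]`, hence temperate. -/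
theorem smoothTransition_hasTemperateGrowth :
    Function.HasTemperateGrowth Real.smoothTransition := by
  have hs : ContDiff ℝ (⊤ : ℕ∞) Real.smoothTransition := Real.smoothTransition.contDiff
  refine Function.HasTemperateGrowth.of_fderiv (k := 0) (C := 1) ?_
    (hs.differentiable (by simp)) fun t ↦ ?_
  · refine HasCompactSupport.hasTemperateGrowth ?_ (hs.fderiv_right (by simp))
    refine HasCompactSupport.intro (isCompact_Icc (a := (0 : ℝ)) (b := 1)) fun t ht ↦ ?_
    rw [Set.mem_Icc, not_and_or, not_le, not_le] at ht
    rcases ht with ht | ht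
    · have h : Real.smoothTransition =ᶠ[nhds t] fun _ ↦ (0 : ℝ) := by
        filter_upwards [Iio_mem_nhds ht] with u hu
        exact Real.smoothTransition.zero_of_nonpos (le_of_lt hu)
      simp [h.fderiv_eq]
    · have h : Real.smoothTransition =ᶠ[nhds t] fun _ ↦ (1 : ℝ) := by
        filter_upwards [Ioi_mem_nhds ht] with u hu
        exact Real.smoothTransition.one_of_one_le (le_of_lt hu)
      simp [h.fderiv_eq]
  · rw [Real.norm_of_nonneg (Real.smoothTransition.nonneg t)]
    simpa using Real.smoothTransition.le_one t

theorem finset_prod_hasTemperateGrowth {E ι : Type*} [NormedAddCommGroup E] [NormedSpace ℝ E]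
    (s : Finset ι) (f : ι → E → ℝ) (hf : ∀ i, Function.HasTemperateGrowth (f i)) :
    Function.HasTemperateGrowth (fun y ↦ ∏ i ∈ s, f i y) := by
  classical
  induction s using Finset.induction_on with
  | empty => simp
  | insert a s ha ih =>
    simp only [Finset.prod_insert ha]
    exact (hf a).mul ih

theorem norm_sub_sq_hasTemperateGrowth {H : Type*} [NormedAddCommGroup H]
    [InnerProductSpace ℝ H] (c : H) :
    Function.HasTemperateGrowth (fun y : H ↦ ‖y - c‖ ^ 2) :=
  (Function.hasTemperateGrowth_norm_sq H).comp
    (Function.HasTemperateGrowth.id'.sub (.const c))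

/-- The support is only assumed bounded, not relatively compact: polynomial growth replaces
the extreme value theorem. -/
theorem bounded_iteratedFDeriv_of_hasTemperateGrowth {E : Type*} [NormedAddCommGroup E]
    [NormedSpace ℝ E] {f : E → ℝ} (hf : Function.HasTemperateGrowth f) (c : E) (R : ℝ)
    (h0 : ∀ y ∉ Metric.closedBall c R, f y = 0) (p : ℕ) :
    ∃ C : ℝ, ∀ y, ‖iteratedFDeriv ℝ p f y‖ ≤ C := by
  obtain ⟨k, C, hC, h⟩ := hf.norm_iteratedFDeriv_le_uniform p
  refine ⟨C * (1 + (‖c‖ + |R|)) ^ k, fun y ↦ ?_⟩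
  by_cases hy : y ∈ Metric.closedBall c R
  · refine (h p le_rfl y).trans ?_
    have hn : ‖y‖ ≤ ‖c‖ + |R| := by
      have h1 : ‖y - c‖ ≤ R := mem_closedBall_iff_norm.mp hy
      have h2 := norm_add_le c (y - c)
      rw [add_sub_cancel] at h2
      linarith [le_abs_self R]
    gcongr
  · have hsub : tsupport f ⊆ Metric.closedBall c R :=
      closure_minimal (fun z hz ↦ by_contra fun hz' ↦ hz (h0 z hz')) Metric.isClosed_closedBall
    have hz : iteratedFDeriv ℝ p f y = 0 :=
      by_contra fun hne ↦ hy (hsub (support_iteratedFDeriv_subset p hne))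
    rw [hz, norm_zero]
    positivity


/-- On a real Hilbert space, for any scalloped open set
`V = B(x₀,r₀) ∩ ᶜB̄(x₁,r₁) ∩ ⋯ ∩ ᶜB̄(x_m,r_m)` there is a `C^∞` function
`ω : H → [0,1]` which is positive exactly on `V`, vanishes off `V`, and has bounded
differentials of all orders. -/
theorem scalloped_cutoff_function
    {H : Type*} [NormedAddCommGroup H] [InnerProductSpace ℝ H] [CompleteSpace H]
    (m : ℕ) (x : Fin (m + 1) → H) (r : Fin (m + 1) → ℝ) (hr : ∀ i, 0 < r i) :
    ∃ ω : H → ℝ,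
      ContDiff ℝ (⊤ : ℕ∞) ω ∧
      (∀ y, ω y ∈ Set.Icc (0 : ℝ) 1) ∧
      (∀ y ∈ Metric.ball (x 0) (r 0) ∩
          ⋂ i : Fin m, (Metric.closedBall (x i.succ) (r i.succ))ᶜ, 0 < ω y) ∧
      (∀ y ∉ Metric.ball (x 0) (r 0) ∩
          ⋂ i : Fin m, (Metric.closedBall (x i.succ) (r i.succ))ᶜ, ω y = 0) ∧
      (∀ p : ℕ, ∃ C : ℝ, ∀ y, ‖iteratedFDeriv ℝ p ω y‖ ≤ C) := by
  set ω : H → ℝ := fun y ↦ Real.smoothTransition (r 0 ^ 2 - ‖y - x 0‖ ^ 2) *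
    ∏ i : Fin m, Real.smoothTransition (‖y - x i.succ‖ ^ 2 - r i.succ ^ 2) with hω
  have hT : Function.HasTemperateGrowth ω :=
    (smoothTransition_hasTemperateGrowth.comp
      ((Function.HasTemperateGrowth.const (r 0 ^ 2)).sub
        (norm_sub_sq_hasTemperateGrowth (x 0)))).mul
      (finset_prod_hasTemperateGrowth _ _ fun i ↦ smoothTransition_hasTemperateGrowth.comp
        ((norm_sub_sq_hasTemperateGrowth (x i.succ)).sub (.const (r i.succ ^ 2))))
  have hzero : ∀ y ∉ Metric.ball (x 0) (r 0) ∩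
      ⋂ i : Fin m, (Metric.closedBall (x i.succ) (r i.succ))ᶜ, ω y = 0 := by
    intro y hy
    rw [Set.mem_inter_iff, not_and_or] at hy
    rcases hy with hy | hy
    · rw [mem_ball_iff_norm, not_lt] at hy
      have h : r 0 ^ 2 ≤ ‖y - x 0‖ ^ 2 := pow_le_pow_left₀ (hr 0).le hy 2
      simp only [hω]
      rw [Real.smoothTransition.zero_of_nonpos (sub_nonpos.mpr h), zero_mul]
    · simp only [Set.mem_iInter, not_forall, Set.mem_compl_iff, not_not,
        mem_closedBall_iff_norm] at hy
      obtain ⟨i, hi⟩ := hy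
      have h : ‖y - x i.succ‖ ^ 2 ≤ r i.succ ^ 2 := pow_le_pow_left₀ (norm_nonneg _) hi 2
      simp only [hω]
      rw [Finset.prod_eq_zero (Finset.mem_univ i)
        (Real.smoothTransition.zero_of_nonpos (sub_nonpos.mpr h)), mul_zero]
  refine ⟨ω, hT.1, fun y ↦ ⟨?_, ?_⟩, ?_, hzero, ?_⟩
  · exact mul_nonneg (Real.smoothTransition.nonneg _)
      (Finset.prod_nonneg fun i _ ↦ Real.smoothTransition.nonneg _)
  · exact mul_le_one₀ (Real.smoothTransition.le_one _)
      (Finset.prod_nonneg fun i _ ↦ Real.smoothTransition.nonneg _)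
      (Finset.prod_le_one (fun i _ ↦ Real.smoothTransition.nonneg _)
        fun i _ ↦ Real.smoothTransition.le_one _)
  · rintro y ⟨hy0, hy⟩
    rw [mem_ball_iff_norm] at hy0
    simp only [Set.mem_iInter, Set.mem_compl_iff, mem_closedBall_iff_norm, not_le] at hy
    refine mul_pos (Real.smoothTransition.pos_of_pos (sub_pos.mpr ?_))
      (Finset.prod_pos fun i _ ↦ Real.smoothTransition.pos_of_pos (sub_pos.mpr ?_))
    · exact pow_lt_pow_left₀ hy0 (norm_nonneg _) two_ne_zero
    · exact pow_lt_pow_left₀ (hy i) (hr i.succ).le two_ne_zero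
  · exact bounded_iteratedFDeriv_of_hasTemperateGrowth hT (x 0) (r 0) fun y hy ↦
      hzero y fun h ↦ hy (Metric.ball_subset_closedBall h.1)
end

section
/- Let A₁ and A₂ be nonempty, closed, disjoint subsets of a separable real Hilbert space H. Then there exists a function χ : H → ℝ which is C^∞, takes values in [0,1], satisfies χ(x) = 0 for every x ∈ A₁ and χ(x) > 0 for every x ∈ A₂, and has bounded differentials of all orders. -/
/-!
The function is a weighted sum of smooth bumps supported in balls that avoid `A₁`.

For `r ≥ 0`, the bump `ψ_r x = smoothTransition (r² - ‖x‖²)` is positive exactly on the open ball of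
radius `r`. Its differentials are bounded although closed balls need not be compact: on the ball,
those of `r² - ‖x‖²` are bounded because `‖x‖²` has temperate growth, and those of
`smoothTransition` are only evaluated on the compact interval `[0, r²]`; off the ball everything
vanishes.

Let `d k` be a dense sequence in `H` and `r k` the distance from `d k` to `A₁`. The balls of
centre `d k` and radius `r k` avoid `A₁` and cover its complement. If `C k p` bounds the `p`-th
differential of the `k`-th bump, the weights `2^{-k-1} / (1 + ∑_{j ≤ k} C k j)` make the weighted
bounds at most `2^{-k-1}` as soon as `k ≥ p`. Hence the series of the `p`-th differentials
converges uniformly for every `p`, and the sum is smooth with all differentials bounded.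
-/

open scoped ContDiff

/-- Bump at the origin, positive exactly on the open ball of radius `r` when `0 ≤ r`. -/
noncomputable def ballBump {H : Type*} [NormedAddCommGroup H] (r : ℝ) (x : H) : ℝ :=
  Real.smoothTransition (r ^ 2 - ‖x‖ ^ 2)

lemma ballBump_eq_zero {H : Type*} [NormedAddCommGroup H] {r : ℝ}
    (hr : 0 ≤ r) {x : H} (hx : r ≤ ‖x‖) : ballBump r x = 0 :=
  Real.smoothTransition.zero_of_nonpos (by nlinarith)

lemma ballBump_pos {H : Type*} [NormedAddCommGroup H] {r : ℝ}
    {x : H} (hx : ‖x‖ < r) : 0 < ballBump r x :=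
  Real.smoothTransition.pos_of_pos (by nlinarith [norm_nonneg x])

section
variable {H : Type*} [NormedAddCommGroup H] [InnerProductSpace ℝ H]

lemma ballBump_contDiff (r : ℝ) : ContDiff ℝ ∞ (ballBump r : H → ℝ) :=
  Real.smoothTransition.contDiff.comp (contDiff_const.sub (contDiff_norm_sq ℝ))

lemma ballBump_bounded {r : ℝ} (hr : 0 ≤ r) (n : ℕ) :
    ∃ C : ℝ, 0 ≤ C ∧ ∀ x : H, ‖iteratedFDeriv ℝ n (ballBump r : H → ℝ) x‖ ≤ C := by
  have hf : Function.HasTemperateGrowth (fun x : H ↦ r ^ 2 - ‖x‖ ^ 2) :=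
    (Function.HasTemperateGrowth.const (r ^ 2)).sub (Function.hasTemperateGrowth_norm_sq H)
  obtain ⟨k, D, hD0, hD⟩ := hf.norm_iteratedFDeriv_le_uniform n
  have hg (i : ℕ) : ∃ C : ℝ, ∀ t ∈ Set.Icc 0 (r ^ 2),
      ‖iteratedFDeriv ℝ i Real.smoothTransition t‖ ≤ C :=
    isCompact_Icc.exists_bound_of_continuousOn
      ((Real.smoothTransition.contDiff (n := ⊤)).continuous_iteratedFDeriv
        (mod_cast le_top)).continuousOn
  choose C hC using hg
  have hC0 (i : ℕ) : 0 ≤ C i := (norm_nonneg _).trans (hC i 0 ⟨le_rfl, by positivity⟩)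
  set M : ℝ := ∑ i ∈ Finset.range (n + 1), C i
  -- Adding `1` makes the base at least `1`, so that it is dominated by all its positive powers.
  set E : ℝ := D * (1 + r) ^ k + 1
  have hE : 1 ≤ E := by
    have : 0 ≤ D * (1 + r) ^ k := by positivity
    simp only [E]; linarith
  have hM : 0 ≤ M := Finset.sum_nonneg fun i _ ↦ hC0 i
  refine ⟨n.factorial * M * E ^ n, by positivity, fun x ↦ ?_⟩
  by_cases hx : ‖x‖ ≤ r
  · refine norm_iteratedFDeriv_comp_le (N := ∞) Real.smoothTransition.contDiff hf.1
      (mod_cast le_top) x (fun i hi ↦ ?_) fun i hi1 hi ↦ ?_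
    · refine (hC i _ ⟨by nlinarith [norm_nonneg x], by nlinarith [norm_nonneg x]⟩).trans ?_
      exact Finset.single_le_sum (fun i _ ↦ hC0 i) (Finset.mem_range.2 (by omega))
    · calc _ ≤ D * (1 + ‖x‖) ^ k := hD i hi x
        _ ≤ D * (1 + r) ^ k := by gcongr
        _ ≤ E := by simp [E]
        _ ≤ E ^ i := le_self_pow₀ hE (by omega)
  · have hx' : x ∉ tsupport (ballBump r : H → ℝ) := by
      intro h
      have : tsupport (ballBump r : H → ℝ) ⊆ Metric.closedBall 0 r := by
        refine closure_minimal (fun y hy ↦ ?_) Metric.isClosed_closedBall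
        by_contra h'
        exact hy (ballBump_eq_zero hr (by simpa using (not_le.1 (by simpa using h')).le))
      exact hx (by simpa using this h)
    have h0 : iteratedFDeriv ℝ n (ballBump r : H → ℝ) x = 0 := by
      by_contra h
      exact hx' (support_iteratedFDeriv_subset n h)
    rw [h0, norm_zero]
    positivity

end

/-- A single sequence of weights makes countably many rows of bounds summable at once: for fixed
`p`, the bound `C k p` is one of the terms of the denominator for all `k ≥ p`. -/
lemma exists_weights (C : ℕ → ℕ → ℝ) (hC : ∀ k p, 0 ≤ C k p) :
    ∃ a : ℕ → ℝ, (∀ k, 0 < a k) ∧ (∀ k, a k ≤ 1 / 2 / 2 ^ k) ∧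
      ∀ p, Summable fun k ↦ a k * C k p := by
  have hS (k : ℕ) : 0 ≤ ∑ j ∈ Finset.range (k + 1), C k j := Finset.sum_nonneg fun j _ ↦ hC k j
  refine ⟨fun k ↦ 1 / 2 / 2 ^ k / (1 + ∑ j ∈ Finset.range (k + 1), C k j), fun k ↦ ?_,
    fun k ↦ ?_, fun p ↦ ?_⟩
  · have := hS k
    positivity
  · exact div_le_self (by positivity) (by linarith [hS k])
  · refine Summable.of_norm_bounded_eventually_nat (summable_geometric_two' 1) ?_
    filter_upwards [Filter.eventually_ge_atTop p] with k hk
    have h1 := hS k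
    have h2 : C k p ≤ ∑ j ∈ Finset.range (k + 1), C k j :=
      Finset.single_le_sum (f := C k) (fun i _ ↦ hC k i) (Finset.mem_range.2 (by omega))
    have h3 := hC k p
    rw [Real.norm_of_nonneg (by positivity), div_mul_eq_mul_div, div_le_iff₀ (by positivity)]
    exact mul_le_mul_of_nonneg_left (by linarith) (by positivity)


/-- For nonempty, closed, disjoint subsets `A₁, A₂` of a separable real Hilbert space,
there is a `C^∞` function `χ : H → [0,1]` which vanishes on `A₁`, is positive on `A₂`,
and has bounded differentials of all orders. -/
theorem separating_cutoff_function
    {H : Type*} [NormedAddCommGroup H] [InnerProductSpace ℝ H] [CompleteSpace H]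
    [TopologicalSpace.SeparableSpace H]
    (A₁ A₂ : Set H) (h1 : A₁.Nonempty) (h2 : A₂.Nonempty)
    (hc1 : IsClosed A₁) (hc2 : IsClosed A₂) (hd : Disjoint A₁ A₂) :
    ∃ χ : H → ℝ,
      ContDiff ℝ (⊤ : ℕ∞) χ ∧
      (∀ y, χ y ∈ Set.Icc (0 : ℝ) 1) ∧
      (∀ y ∈ A₁, χ y = 0) ∧
      (∀ y ∈ A₂, 0 < χ y) ∧
      (∀ p : ℕ, ∃ C : ℝ, ∀ y, ‖iteratedFDeriv ℝ p χ y‖ ≤ C) := by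
  have hd0 := TopologicalSpace.denseRange_denseSeq H
  set d := TopologicalSpace.denseSeq H
  let φ : ℕ → H → ℝ := fun k x ↦ ballBump (Metric.infDist (d k) A₁) (x - d k)
  have hφ (k : ℕ) : ContDiff ℝ ∞ (φ k) :=
    (ballBump_contDiff _).comp (contDiff_id.sub contDiff_const)
  have hb (k p : ℕ) : ∃ C : ℝ, 0 ≤ C ∧ ∀ x, ‖iteratedFDeriv ℝ p (φ k) x‖ ≤ C := by
    obtain ⟨C, hC0, hC⟩ := ballBump_bounded (H := H)
      (Metric.infDist_nonneg (x := d k) (s := A₁)) p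
    refine ⟨C, hC0, fun x ↦ ?_⟩
    simp only [φ]
    rw [iteratedFDeriv_comp_sub]
    exact hC _
  choose C hC0 hC using hb
  obtain ⟨a, ha0, ha, has⟩ := exists_weights C hC0
  have hf (k : ℕ) : ContDiff ℝ ∞ (fun x ↦ a k * φ k x) := contDiff_const.mul (hφ k)
  have hfb (p k : ℕ) (x : H) : ‖iteratedFDeriv ℝ p (fun x ↦ a k * φ k x) x‖ ≤ a k * C k p := by
    have h : iteratedFDeriv ℝ p (fun x ↦ a k * φ k x) x = a k • iteratedFDeriv ℝ p (φ k) x := by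
      simpa only [smul_eq_mul] using iteratedFDeriv_const_smul_apply' (𝕜 := ℝ) (i := p) (a := a k)
        (f := φ k) (x := x) ((hφ k).of_le (mod_cast le_top)).contDiffAt
    rw [h, norm_smul, Real.norm_of_nonneg (ha0 k).le]
    exact mul_le_mul_of_nonneg_left (hC k p x) (ha0 k).le
  have hnn (k : ℕ) (x : H) : 0 ≤ a k * φ k x :=
    mul_nonneg (ha0 k).le (Real.smoothTransition.nonneg _)
  have hle (k : ℕ) (x : H) : a k * φ k x ≤ 1 / 2 / 2 ^ k :=
    (mul_le_of_le_one_right (ha0 k).le (Real.smoothTransition.le_one _)).trans (ha k)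
  have hs (x : H) : Summable fun k ↦ a k * φ k x :=
    Summable.of_nonneg_of_le (hnn · x) (hle · x) (summable_geometric_two' 1)
  refine ⟨fun x ↦ ∑' k, a k * φ k x, ?_, fun y ↦ ⟨tsum_nonneg (hnn · y), ?_⟩, fun y hy ↦ ?_,
    fun y hy ↦ ?_, fun p ↦ ⟨∑' k, a k * C k p, fun y ↦ ?_⟩⟩
  · exact contDiff_tsum (v := fun p k ↦ a k * C k p) hf (fun p _ ↦ has p)
      fun p k x _ ↦ hfb p k x
  · exact ((hs y).tsum_le_tsum (hle · y) (summable_geometric_two' 1)).trans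
      (tsum_geometric_two' 1).le
  · have h (k : ℕ) : φ k y = 0 := by
      refine ballBump_eq_zero Metric.infDist_nonneg ?_
      rw [← dist_eq_norm, dist_comm]
      exact Metric.infDist_le_dist_of_mem hy
    simp [h]
  · have hy1 : y ∉ A₁ := fun h ↦ Set.disjoint_left.1 hd h hy
    have hpos := (hc1.notMem_iff_infDist_pos h1).1 hy1
    -- A point of the sequence this close to `y` is at distance more than half of it from `A₁`.
    obtain ⟨k, hk⟩ := hd0.exists_dist_lt y (half_pos hpos)
    refine (hs y).tsum_pos (hnn · y) k (mul_pos (ha0 k) (ballBump_pos ?_))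
    rw [← dist_eq_norm]
    have := Metric.infDist_le_infDist_add_dist (s := A₁) (x := y) (y := d k)
    linarith
  · rw [iteratedFDeriv_tsum_apply (N := ⊤) (v := fun p k ↦ a k * C k p) hf (fun p _ ↦ has p)
      (fun p k x _ ↦ hfb p k x) (mod_cast le_top)]
    exact tsum_of_norm_bounded (has p).hasSum (hfb p · y)
end
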